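/- J_3[13] = I_3[13]; that is, since b_13 = 13, J_3[13] = {0,1,2,3,4,5,13}. -/

import Mathlib

/-!
An `S(2,4,13)` is a projective plane of order 3: every point lies on 4 blocks, there are 13 blocks,
and any two blocks meet in exactly one point.

*Upper bound.* Suppose three such designs `B₁, B₂, B₃` share the same `13 - m` blocks pairwise, with
`1 ≤ m ≤ 7`. Let `T = B₁ \ B₂` (so `#T = m`) and let `r x` be the number of blocks of `T` through
`x`. Then `r x ≠ 1` (`deg_ne_one`), and since blocks pairwise meet once, `∑ x ∈ b, r x = m + 3` for
each `b ∈ T` (`sum_deg_block`).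

If `m = 7`, then `∑ r = 28` and `∑ r² = 70`. Should some point have `r = 4`, all its blocks are in
`T`, so `r ≥ 2` everywhere and `∑ (r - 2)(r - 4) = 6 > 0` is absurd; otherwise `r ∈ {0, 2, 3}`, so
`3 ∣ ∑ r (r + 1) = 98`, absurd.

If `m ≤ 6`, a block `b ∈ T` contains a point `x` with `r x = 2`, lying on `b` and one other block
`c ∈ T`. The blocks of `B₂ \ B₁` through `x` must be obtained by exchanging a point `w ∈ b` with a
point `u ∈ c`, and both have `r ≥ 3` (`exchange`). As `m + 3 ≤ 9` and `r ≥ 2` on `b` and `c`, the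
points `w` and `u` are determined by `T`; hence the same new block `b - w + u` lies in `B₃`, and so
in `B₂ ∩ B₃ = B₁ ∩ B₂`, although it is not in `B₁`.

*Existence.* For `k ∈ {0, 1, 2, 3, 4, 5, 13}` three images of the cyclic plane with difference set
`{0, 1, 3, 9}` under suitable permutations of the points intersect as required.
-/

/-- The number of blocks of an `S(2,4,v)` design: `b_v = v(v-1)/12`. -/
def steinerBlockCount (v : ℕ) : ℕ := v * (v - 1) / 12

/-- `B` is the block set of a Steiner system `S(2,4,·)` on the point set `V`:
every block is a 4-element subset of `V` and every pair of distinct points of `V`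
lies in exactly one block. -/
def IsS24 {α : Type} [DecidableEq α] (V : Finset α) (B : Finset (Finset α)) : Prop :=
  (∀ b ∈ B, b ⊆ V ∧ b.card = 4) ∧
  ∀ x y : α, x ∈ V → y ∈ V → x ≠ y → ∃! b, b ∈ B ∧ x ∈ b ∧ y ∈ b

/-- Three block sets have pairwise-coincident intersections. -/
def CoincidentInts {α : Type} [DecidableEq α] (B1 B2 B3 : Finset (Finset α)) : Prop :=
  B1 ∩ B2 = B1 ∩ B3 ∧ B1 ∩ B2 = B2 ∩ B3

/-- `J_3[v]`: the set of `k` such that there exist three `S(2,4,v)` designs on a common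
`v`-element point set whose pairwise intersections coincide and have cardinality `k`. -/
def J3 (v : ℕ) : Set ℕ :=
  {k | ∃ B1 B2 B3 : Finset (Finset (Fin v)),
    IsS24 Finset.univ B1 ∧ IsS24 Finset.univ B2 ∧ IsS24 Finset.univ B3 ∧
    CoincidentInts B1 B2 B3 ∧ (B1 ∩ B2 ∩ B3).card = k}

/-- `I_3[v] = {0,1,...,b_v} \ {b_v-7, ..., b_v-1}`. -/
def I3 (v : ℕ) : Set ℕ :=
  {k | k ≤ steinerBlockCount v} \
    {steinerBlockCount v - 7, steinerBlockCount v - 6, steinerBlockCount v - 5,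
     steinerBlockCount v - 4, steinerBlockCount v - 3, steinerBlockCount v - 2,
     steinerBlockCount v - 1}

open Finset

/-! ### Counting in a plane of order 3 -/

/-- The number of members of the family `S` through the point `x`. -/
def deg (S : Finset (Finset (Fin 13))) (x : Fin 13) : ℕ := #{b ∈ S | x ∈ b}

lemma sum_deg (S : Finset (Finset (Fin 13))) (s : Finset (Fin 13)) :
    ∑ x ∈ s, deg S x = ∑ b ∈ S, #(s ∩ b) := by
  simp only [deg, card_filter]
  rw [sum_comm]
  refine sum_congr rfl fun b _ => ?_
  rw [← card_filter, filter_mem_eq_inter]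

lemma card_four_of_ne {x y z w : Fin 13} (h1 : x ≠ y) (h2 : x ≠ z) (h3 : x ≠ w) (h4 : y ≠ z)
    (h5 : y ≠ w) (h6 : z ≠ w) : #({x, y, z, w} : Finset (Fin 13)) = 4 :=
  card_eq_four.2 ⟨x, y, z, w, h1, h2, h3, h4, h5, h6, rfl⟩

section Plane

variable {B : Finset (Finset (Fin 13))}

lemma IsS24.block_eq (h : IsS24 univ B) {x y : Fin 13} {b c : Finset (Fin 13)} (hxy : x ≠ y)
    (hb : b ∈ B) (hc : c ∈ B) (xb : x ∈ b) (yb : y ∈ b) (xc : x ∈ c) (yc : y ∈ c) : b = c :=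
  (h.2 x y (mem_univ _) (mem_univ _) hxy).unique ⟨hb, xb, yb⟩ ⟨hc, xc, yc⟩

lemma IsS24.exists_block (h : IsS24 univ B) {x y : Fin 13} (hxy : x ≠ y) :
    ∃ b ∈ B, x ∈ b ∧ y ∈ b :=
  (h.2 x y (mem_univ _) (mem_univ _) hxy).exists

/-- The blocks through `x` partition the other 12 points into triples. -/
lemma IsS24.deg_eq (h : IsS24 univ B) (x : Fin 13) : deg B x = 4 := by
  have key : (univ.erase x : Finset (Fin 13)) = {b ∈ B | x ∈ b}.biUnion (fun b => b.erase x) := by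
    ext y
    simp only [mem_erase, mem_univ, and_true, mem_biUnion, mem_filter]
    constructor
    · intro hy
      obtain ⟨b, hb, h1, h2⟩ := h.exists_block hy
      exact ⟨b, ⟨hb, h2⟩, hy, h1⟩
    · rintro ⟨b, -, hy, -⟩
      exact hy
  have hc := congrArg card key
  rw [card_biUnion] at hc
  · rw [sum_congr rfl (g := fun _ => 3)] at hc
    · simp at hc
      unfold deg
      omega
    · intro b hb
      rw [mem_filter] at hb
      rw [card_erase_of_mem hb.2, (h.1 b hb.1).2]
  · intro b hb c hc hbc
    refine Finset.disjoint_left.2 ?_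
    intro y hy hy'
    simp only [mem_coe, mem_filter, mem_erase] at hb hc hy hy'
    exact hbc (h.block_eq hy.1 hb.1 hc.1 hy.2 hb.2 hy'.2 hc.2)

lemma IsS24.card_eq (h : IsS24 univ B) : #B = 13 := by
  have h1 := sum_deg B univ
  have h2 : ∑ b ∈ B, #(univ ∩ b) = ∑ _b ∈ B, 4 :=
    sum_congr rfl fun b hb => by rw [univ_inter, (h.1 b hb).2]
  rw [sum_congr rfl (fun x _ => h.deg_eq x), h2] at h1
  simp at h1
  omega

lemma IsS24.card_inter_le (h : IsS24 univ B) {b c : Finset (Fin 13)} (hb : b ∈ B) (hc : c ∈ B)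
    (hbc : b ≠ c) : #(b ∩ c) ≤ 1 := by
  rw [card_le_one]
  intro x hx y hy
  rw [mem_inter] at hx hy
  by_contra hxy
  exact hbc (h.block_eq hxy hb hc hx.1 hy.1 hx.2 hy.2)

/-- Two blocks always meet: the 16 incidences on the points of `b` consist of 4 on `b` itself and
at most one for each of the 12 other blocks. -/
lemma IsS24.card_inter (h : IsS24 univ B) {b c : Finset (Fin 13)} (hb : b ∈ B) (hc : c ∈ B)
    (hbc : b ≠ c) : #(b ∩ c) = 1 := by
  have h1 := sum_deg B b
  rw [sum_congr rfl (fun x _ => h.deg_eq x), ← add_sum_erase _ _ hb, inter_self, sum_const,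
    (h.1 b hb).2] at h1
  have h2 : ∀ c ∈ B.erase b, #(b ∩ c) ≤ 1 := fun c hc => by
    rw [mem_erase] at hc
    exact h.card_inter_le hb hc.2 hc.1.symm
  refine (sum_eq_sum_iff_of_le h2).1 ?_ c (mem_erase.2 ⟨hbc.symm, hc⟩)
  rw [sum_const, card_erase_of_mem hb, h.card_eq]
  simp at h1 ⊢
  omega

lemma IsS24.sum_deg_block (h : IsS24 univ B) {T : Finset (Finset (Fin 13))} (hT : T ⊆ B)
    {b : Finset (Fin 13)} (hb : b ∈ T) : ∑ x ∈ b, deg T x = #T + 3 := by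
  rw [sum_deg, ← add_sum_erase _ _ hb, inter_self, (h.1 b (hT hb)).2,
    sum_congr rfl (g := fun _ => 1)]
  · have := card_erase_add_one hb
    simp only [sum_const, smul_eq_mul, mul_one]
    omega
  · intro c hc
    rw [mem_erase] at hc
    exact h.card_inter (hT hb) (hT hc.2) hc.1.symm

lemma IsS24.sum_deg_univ (h : IsS24 univ B) {T : Finset (Finset (Fin 13))} (hT : T ⊆ B) :
    ∑ x, deg T x = 4 * #T := by
  rw [sum_deg, sum_congr rfl (g := fun _ => 4)]
  · simp [mul_comm]
  · intro b hb
    rw [univ_inter, (h.1 b (hT hb)).2]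

lemma IsS24.sum_deg_sq (h : IsS24 univ B) {T : Finset (Finset (Fin 13))} (hT : T ⊆ B) :
    ∑ x, deg T x * deg T x = #T * (#T + 3) := by
  have h1 : ∑ b ∈ T, ∑ x ∈ b, deg T x = #T * (#T + 3) := by
    rw [sum_congr rfl (fun b hb => h.sum_deg_block hT hb), sum_const, smul_eq_mul]
  rw [← h1]
  have h2 : ∀ b ∈ T, ∑ x ∈ b, deg T x = ∑ x, if x ∈ b then deg T x else 0 := fun b _ => by
    rw [← sum_filter, filter_mem_eq_inter, univ_inter]
  rw [sum_congr rfl h2, sum_comm]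
  refine sum_congr rfl fun x _ => ?_
  rw [← sum_filter, sum_const, smul_eq_mul]
  rfl

lemma IsS24.deg_le (h : IsS24 univ B) {T : Finset (Finset (Fin 13))} (hT : T ⊆ B) (x : Fin 13) :
    deg T x ≤ 4 := by
  rw [← h.deg_eq x]
  exact card_le_card (filter_subset_filter _ hT)

end Plane

/-! ### The difference of two planes -/

section Trade

variable {B B' : Finset (Finset (Fin 13))}

lemma deg_sdiff (h : IsS24 univ B) (h' : IsS24 univ B') (x : Fin 13) :
    deg (B \ B') x = deg (B' \ B) x := by
  have key : ∀ S S' : Finset (Finset (Fin 13)), deg (S \ S') x + deg (S ∩ S') x = deg S x := by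
    intro S S'
    unfold deg
    rw [← card_union_of_disjoint, ← filter_union, sdiff_union_inter]
    exact disjoint_filter_filter (disjoint_sdiff_inter _ _)
  have h1 := key B B'
  have h2 := key B' B
  rw [h.deg_eq] at h1
  rw [h'.deg_eq, inter_comm] at h2
  omega

/-- `B \ B'` and `B' \ B` cover the same pairs of points. -/
lemma exists_cover_swap (h : IsS24 univ B) (h' : IsS24 univ B') {x y : Fin 13} (hxy : x ≠ y)
    {b : Finset (Fin 13)} (hb : b ∈ B \ B') (xb : x ∈ b) (yb : y ∈ b) :
    ∃ c ∈ B' \ B, x ∈ c ∧ y ∈ c := by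
  obtain ⟨c, hc, xc, yc⟩ := h'.exists_block hxy
  rw [mem_sdiff] at hb
  refine ⟨c, mem_sdiff.2 ⟨hc, fun hcB => hb.2 ?_⟩, xc, yc⟩
  rwa [h.block_eq hxy hb.1 hcB xb yb xc yc]

lemma not_subset_of_sdiff (h : IsS24 univ B) (h' : IsS24 univ B') {b c : Finset (Fin 13)}
    (hb : b ∈ B \ B') (hc : c ∈ B' \ B) : ¬ b ⊆ c := by
  intro hbc
  rw [mem_sdiff] at hb hc
  have := eq_of_subset_of_card_le hbc (by rw [(h.1 b hb.1).2, (h'.1 c hc.1).2])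
  exact hb.2 (this ▸ hc.1)

/-- If `b` were the only block of `B \ B'` through `x`, the only block of `B' \ B` through `x`
would have to contain all of `b`. -/
lemma deg_ne_one (h : IsS24 univ B) (h' : IsS24 univ B') (x : Fin 13) : deg (B \ B') x ≠ 1 := by
  intro h1
  have h2 := h1
  rw [deg_sdiff h h'] at h2
  obtain ⟨b, hb⟩ := card_eq_one.1 h1
  obtain ⟨c, hc⟩ := card_eq_one.1 h2
  have hb' : b ∈ B \ B' ∧ x ∈ b := mem_filter.1 (hb ▸ mem_singleton_self b)
  have hc' : c ∈ B' \ B ∧ x ∈ c := mem_filter.1 (hc ▸ mem_singleton_self c)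
  refine not_subset_of_sdiff h h' hb'.1 hc'.1 fun y hy => ?_
  by_cases hxy : x = y
  · exact hxy ▸ hc'.2
  obtain ⟨d, hd, xd, yd⟩ := exists_cover_swap h h' hxy hb'.1 hb'.2 hy
  have : d ∈ ({c} : Finset _) := hc ▸ mem_filter.2 ⟨hd, xd⟩
  rwa [← mem_singleton.1 this]

lemma two_le_deg (h : IsS24 univ B) (h' : IsS24 univ B') {x : Fin 13} {b : Finset (Fin 13)}
    (hb : b ∈ B \ B') (xb : x ∈ b) : 2 ≤ deg (B \ B') x := by
  have h1 := deg_ne_one h h' x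
  have h2 : 0 < deg (B \ B') x := card_pos.2 ⟨b, mem_filter.2 ⟨hb, xb⟩⟩
  omega

/-- If a block of `B' \ B` contains a point `u` of `c` off `b` and two points `y, z` of `b` off `c`,
then the pairs `uy` and `uz` lie in two blocks of `B \ B'` distinct from each other and from `c`. -/
lemma three_le_deg (h : IsS24 univ B) (h' : IsS24 univ B') {u y z : Fin 13}
    {b c e : Finset (Fin 13)} (hb : b ∈ B \ B') (hc : c ∈ B \ B') (he : e ∈ B' \ B) (hyz : y ≠ z)
    (ue : u ∈ e) (ye : y ∈ e) (ze : z ∈ e) (yb : y ∈ b) (zb : z ∈ b) (ub : u ∉ b) (uc : u ∈ c)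
    (yc : y ∉ c) (zc : z ∉ c) : 3 ≤ deg (B \ B') u := by
  have huy : u ≠ y := fun hh => ub (hh ▸ yb)
  have huz : u ≠ z := fun hh => ub (hh ▸ zb)
  obtain ⟨g1, hg1, u1, y1⟩ := exists_cover_swap h' h huy he ue ye
  obtain ⟨g2, hg2, u2, z2⟩ := exists_cover_swap h' h huz he ue ze
  have n1 : c ≠ g1 := fun hh => yc (hh ▸ y1)
  have n2 : c ≠ g2 := fun hh => zc (hh ▸ z2)
  have n3 : g1 ≠ g2 := fun hh => by
    subst hh
    have := h.block_eq hyz (mem_sdiff.1 hb).1 (mem_sdiff.1 hg1).1 yb zb y1 z2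
    exact ub (this ▸ u1)
  rw [← card_eq_three.2 ⟨c, g1, g2, n1, n2, n3, rfl⟩]
  refine card_le_card fun g hg => ?_
  simp only [mem_insert, mem_singleton] at hg
  rw [mem_filter]
  rcases hg with rfl | rfl | rfl
  · exact ⟨hc, uc⟩
  · exact ⟨hg1, u1⟩
  · exact ⟨hg2, u2⟩

/-- The core of `exchange`. Here `b, c` and `e, f` play the role of the blocks through `x` of
`B \ B'` and of `B' \ B`, and `e` is the one of the latter that shares two points besides `x` with
`b`; thus `e` arises from `b` by replacing one point by a point of `c`. -/
lemma exchange_aux (h : IsS24 univ B) (h' : IsS24 univ B') {x : Fin 13}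
    {b c e f : Finset (Fin 13)} (hb : b ∈ B \ B') (hc : c ∈ B \ B') (he : e ∈ B' \ B)
    (hf : f ∈ B' \ B) (xb : x ∈ b) (xc : x ∈ c) (xe : x ∈ e) (xf : x ∈ f) (hbc : b ≠ c)
    (hef : e ≠ f) (hcov : b ∪ c = e ∪ f) (h2 : 2 ≤ #((b.erase x) ∩ e)) :
    ∃ w ∈ b, ∃ u ∈ c, 3 ≤ deg (B \ B') w ∧ 3 ≤ deg (B \ B') u ∧
      insert u (b.erase w) ∈ B' := by
  have hbc' : ∀ y, y ≠ x → y ∈ b → y ∉ c := fun y hy yb yc =>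
    hbc (h.block_eq hy (mem_sdiff.1 hb).1 (mem_sdiff.1 hc).1 yb xb yc xc)
  have hef' : ∀ y, y ≠ x → y ∈ e → y ∉ f := fun y hy ye yf =>
    hef (h'.block_eq hy (mem_sdiff.1 he).1 (mem_sdiff.1 hf).1 ye xe yf xf)
  have cov1 : ∀ y, y ∈ b → y ∉ e → y ∈ f := fun y yb ye => by
    have : y ∈ e ∪ f := hcov ▸ mem_union_left c yb
    exact (mem_union.1 this).resolve_left ye
  have cov2 : ∀ y, y ∈ e → y ∉ b → y ∈ c := fun y ye yb => by
    have : y ∈ b ∪ c := hcov ▸ mem_union_left f ye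
    exact (mem_union.1 this).resolve_left yb
  have cov3 : ∀ y, y ∈ f → y ∉ b → y ∈ c := fun y yf yb => by
    have : y ∈ b ∪ c := hcov ▸ mem_union_right e yf
    exact (mem_union.1 this).resolve_left yb
  have cb := (h.1 b (mem_sdiff.1 hb).1).2
  have ce := (h'.1 e (mem_sdiff.1 he).1).2
  have cf := (h'.1 f (mem_sdiff.1 hf).1).2
  obtain ⟨w, wb, we⟩ := not_subset.1 (not_subset_of_sdiff h h' hb he)
  obtain ⟨u, ue, ub⟩ := not_subset.1 (not_subset_of_sdiff h' h he hb)
  have wf := cov1 w wb we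
  have uc := cov2 u ue ub
  have hwx : w ≠ x := fun hh => we (hh ▸ xe)
  have hux : u ≠ x := fun hh => ub (hh ▸ xb)
  obtain ⟨y, hy, z, hz, hyz⟩ := one_lt_card.1 (lt_of_lt_of_le one_lt_two h2)
  simp only [mem_inter, mem_erase] at hy hz
  have hwy : w ≠ y := fun hh => we (hh ▸ hy.2)
  have hwz : w ≠ z := fun hh => we (hh ▸ hz.2)
  have huy : u ≠ y := fun hh => ub (hh ▸ hy.1.2)
  have huz : u ≠ z := fun hh => ub (hh ▸ hz.1.2)
  -- with four points each, `b = {x, y, z, w}` and `e = {x, y, z, u}`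
  have eb : ({x, y, z, w} : Finset (Fin 13)) = b := by
    refine eq_of_subset_of_card_le ?_ ?_
    · intro t ht
      simp only [mem_insert, mem_singleton] at ht
      rcases ht with rfl | rfl | rfl | rfl
      exacts [xb, hy.1.2, hz.1.2, wb]
    · rw [cb, card_four_of_ne]
      exacts [hy.1.1.symm, hz.1.1.symm, hwx.symm, hyz, hwy.symm, hwz.symm]
  have ee : ({x, y, z, u} : Finset (Fin 13)) = e := by
    refine eq_of_subset_of_card_le ?_ ?_
    · intro t ht
      simp only [mem_insert, mem_singleton] at ht
      rcases ht with rfl | rfl | rfl | rfl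
      exacts [xe, hy.2, hz.2, ue]
    · rw [ce, card_four_of_ne]
      exacts [hy.1.1.symm, hz.1.1.symm, hux.symm, hyz, huy.symm, huz.symm]
  -- the two remaining points of `f` lie in `c`
  obtain ⟨s, hs, t, ht, hst⟩ : ∃ s ∈ (f.erase x).erase w, ∃ t ∈ (f.erase x).erase w, s ≠ t := by
    apply one_lt_card.1
    rw [card_erase_of_mem (mem_erase.2 ⟨hwx, wf⟩), card_erase_of_mem xf, cf]
    norm_num
  simp only [mem_erase] at hs ht
  have fnb : ∀ s, s ≠ w → s ≠ x → s ∈ f → s ∉ b := by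
    intro s sw sx sf sb
    rw [← eb] at sb
    simp only [mem_insert, mem_singleton] at sb
    rcases sb with rfl | rfl | rfl | rfl
    · exact sx rfl
    · exact hef' _ sx hy.2 sf
    · exact hef' _ sx hz.2 sf
    · exact sw rfl
  have sb := fnb s hs.1 hs.2.1 hs.2.2
  have tb := fnb t ht.1 ht.2.1 ht.2.2
  refine ⟨w, wb, u, uc, ?_, ?_, ?_⟩
  · exact three_le_deg h h' hc hb hf hst wf hs.2.2 ht.2.2 (cov3 s hs.2.2 sb) (cov3 t ht.2.2 tb)
      (hbc' w hwx wb) wb sb tb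
  · exact three_le_deg h h' hb hc he hyz ue hy.2 hz.2 hy.1.2 hz.1.2 ub uc
      (hbc' y hy.1.1 hy.1.2) (hbc' z hz.1.1 hz.1.2)
  · have : insert u (b.erase w) = e := by
      rw [← ee, ← eb]
      ext t
      simp only [mem_insert, mem_erase, mem_singleton]
      grind
    rw [this]
    exact (mem_sdiff.1 he).1

/-- At a point `x` on exactly two blocks `b, c` of `B \ B'`, some block of `B'` arises from `b` by
replacing a point `w` of `b` by a point `u` of `c`, and both `w` and `u` have degree at least 3. -/
lemma exchange (h : IsS24 univ B) (h' : IsS24 univ B') {x : Fin 13} {b c : Finset (Fin 13)}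
    (hb : b ∈ B \ B') (hc : c ∈ B \ B') (xb : x ∈ b) (xc : x ∈ c) (hbc : b ≠ c)
    (hx : deg (B \ B') x = 2) :
    ∃ w ∈ b, ∃ u ∈ c, 3 ≤ deg (B \ B') w ∧ 3 ≤ deg (B \ B') u ∧
      insert u (b.erase w) ∈ B' := by
  have hT : {g ∈ B \ B' | x ∈ g} = {b, c} := by
    refine (eq_of_subset_of_card_le ?_ ?_).symm
    · intro g hg
      simp only [mem_insert, mem_singleton] at hg
      rcases hg with rfl | rfl
      exacts [mem_filter.2 ⟨hb, xb⟩, mem_filter.2 ⟨hc, xc⟩]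
    · rw [card_pair hbc]
      exact hx.le
  have hx' := hx
  rw [deg_sdiff h h'] at hx'
  obtain ⟨e, f, hef, hT'⟩ := card_eq_two.1 hx'
  have he : e ∈ B' \ B ∧ x ∈ e := mem_filter.1 (hT' ▸ mem_insert_self e {f})
  have hf : f ∈ B' \ B ∧ x ∈ f := mem_filter.1 (hT' ▸ mem_insert_of_mem (mem_singleton_self f))
  have hcov : b ∪ c = e ∪ f := by
    ext y
    rcases eq_or_ne y x with rfl | hyx
    · simp [xb, he.2]
    have side1 : ∀ g ∈ B \ B', x ∈ g → y ∈ g → y ∈ e ∪ f := fun g hg xg yg => by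
      obtain ⟨d, hd, xd, yd⟩ := exists_cover_swap h h' hyx.symm hg xg yg
      have : d ∈ ({e, f} : Finset _) := hT' ▸ mem_filter.2 ⟨hd, xd⟩
      simp only [mem_insert, mem_singleton] at this
      rcases this with rfl | rfl <;> simp [yd]
    have side2 : ∀ g ∈ B' \ B, x ∈ g → y ∈ g → y ∈ b ∪ c := fun g hg xg yg => by
      obtain ⟨d, hd, xd, yd⟩ := exists_cover_swap h' h hyx.symm hg xg yg
      have : d ∈ ({b, c} : Finset _) := hT ▸ mem_filter.2 ⟨hd, xd⟩
      simp only [mem_insert, mem_singleton] at this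
      rcases this with rfl | rfl <;> simp [yd]
    constructor
    · intro hy
      rcases mem_union.1 hy with hy | hy
      exacts [side1 b hb xb hy, side1 c hc xc hy]
    · intro hy
      rcases mem_union.1 hy with hy | hy
      exacts [side2 e he.1 he.2 hy, side2 f hf.1 hf.2 hy]
  -- one of `e`, `f` contains at least two of the three points of `b` other than `x`
  have h3 : 3 ≤ #(b.erase x ∩ e) + #(b.erase x ∩ f) := by
    have h4 : #(b.erase x) = 3 := by
      rw [card_erase_of_mem xb, (h.1 b (mem_sdiff.1 hb).1).2]
    rw [← h4]
    refine le_trans (card_le_card ?_) (card_union_le _ _)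
    intro y hy
    rw [← inter_union_distrib_left, ← hcov]
    exact mem_inter.2 ⟨hy, mem_union_left _ (mem_of_mem_erase hy)⟩
  rcases le_or_gt 2 #(b.erase x ∩ e) with h2 | h2
  · exact exchange_aux h h' hb hc he.1 hf.1 xb xc he.2 hf.2 hbc hef hcov h2
  · exact exchange_aux h h' hb hc hf.1 he.1 xb xc hf.2 he.2 hbc hef.symm
      (hcov.trans (union_comm _ _)) (by omega)

/-- In a small difference each block has at most one point of degree at least 3. -/
lemma eq_of_three_le_deg (h : IsS24 univ B) (h' : IsS24 univ B') (hm : #(B \ B') ≤ 6)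
    {b : Finset (Fin 13)} (hb : b ∈ B \ B') {w w' : Fin 13} (hw : w ∈ b) (hw' : w' ∈ b)
    (h3 : 3 ≤ deg (B \ B') w) (h3' : 3 ≤ deg (B \ B') w') : w = w' := by
  by_contra hne
  have h1 := h.sum_deg_block sdiff_subset hb
  have hw2 : w' ∈ b.erase w := mem_erase.2 ⟨Ne.symm hne, hw'⟩
  rw [← add_sum_erase _ _ hw, ← add_sum_erase _ _ hw2] at h1
  have h2 : #((b.erase w).erase w') • 2 ≤ ∑ x ∈ (b.erase w).erase w', deg (B \ B') x :=
    card_nsmul_le_sum _ _ _ fun x hx =>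
      two_le_deg h h' hb (mem_of_mem_erase (mem_of_mem_erase hx))
  rw [card_erase_of_mem hw2, card_erase_of_mem hw, (h.1 b (mem_sdiff.1 hb).1).2] at h2
  simp at h2
  omega

lemma exists_deg_two (h : IsS24 univ B) (h' : IsS24 univ B') (hm : #(B \ B') ≤ 6)
    {b : Finset (Fin 13)} (hb : b ∈ B \ B') : ∃ x ∈ b, deg (B \ B') x = 2 := by
  by_contra! hne
  have h1 := h.sum_deg_block sdiff_subset hb
  have h2 : #b • 3 ≤ ∑ x ∈ b, deg (B \ B') x := card_nsmul_le_sum _ _ _ fun x hx => by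
    have := two_le_deg h h' hb hx
    have := hne x hx
    omega
  rw [(h.1 b (mem_sdiff.1 hb).1).2] at h2
  simp at h2
  omega

/-- Two planes never differ in exactly 7 blocks. -/
lemma card_sdiff_ne_seven (h : IsS24 univ B) (h' : IsS24 univ B') : #(B \ B') ≠ 7 := by
  intro hm
  have s1 := h.sum_deg_univ (T := B \ B') sdiff_subset
  have s2 := h.sum_deg_sq (T := B \ B') sdiff_subset
  rw [hm] at s1 s2
  set r : Fin 13 → ℕ := deg (B \ B') with hr
  have r1 : ∀ x, r x ≠ 1 := deg_ne_one h h'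
  have r4 : ∀ x, r x ≤ 4 := h.deg_le sdiff_subset
  by_cases hp : ∃ p, r p = 4
  · obtain ⟨p, hp⟩ := hp
    -- every block through `p` belongs to the difference
    have hall : {b ∈ B \ B' | p ∈ b} = {b ∈ B | p ∈ b} :=
      eq_of_subset_of_card_le (filter_subset_filter _ sdiff_subset) (by
        have := h.deg_eq p
        unfold deg at this
        rw [this]
        exact hp.ge)
    have r2 : ∀ x, 2 ≤ r x := fun x => by
      rcases eq_or_ne x p with rfl | hxp
      · omega
      obtain ⟨b, hb, xb, pb⟩ := h.exists_block hxp
      have : b ∈ {b ∈ B \ B' | p ∈ b} := hall ▸ mem_filter.2 ⟨hb, pb⟩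
      exact two_le_deg h h' (mem_filter.1 this).1 xb
    -- `(r - 2) (r - 4) ≤ 0`, summed over all points
    have hle : ∑ x, (r x * r x + 8) ≤ ∑ x, 6 * r x := sum_le_sum fun x _ => by
      have := r2 x
      have := r4 x
      interval_cases r x <;> norm_num
    rw [sum_add_distrib, ← mul_sum, s1, s2] at hle
    simp at hle
  · push Not at hp
    have hdvd : 3 ∣ ∑ x, (r x * r x + r x) := dvd_sum fun x _ => by
      have := r1 x
      have := hp x
      have := r4 x
      interval_cases r x <;> simp_all
    rw [sum_add_distrib, s1, s2] at hdvd
    norm_num at hdvd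

end Trade

/-- Three planes with the same pairwise intersections share all their blocks or at most 5. -/
lemma card_inter_bound {B₁ B₂ B₃ : Finset (Finset (Fin 13))} (h₁ : IsS24 univ B₁)
    (h₂ : IsS24 univ B₂) (h₃ : IsS24 univ B₃) (hc : CoincidentInts B₁ B₂ B₃) :
    #(B₁ ∩ B₂) ≤ 5 ∨ #(B₁ ∩ B₂) = 13 := by
  have hcard := card_sdiff_add_card_inter B₁ B₂
  rw [h₁.card_eq] at hcard
  by_contra! hcon
  have h7 := card_sdiff_ne_seven h₁ h₂
  have hm : #(B₁ \ B₂) ≤ 6 := by omega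
  have hT : B₁ \ B₂ = B₁ \ B₃ := by
    rw [← sdiff_inter_self_left B₁ B₂, hc.1, sdiff_inter_self_left]
  obtain ⟨b, hb⟩ : (B₁ \ B₂).Nonempty := card_pos.1 (by omega)
  obtain ⟨x, xb, hx⟩ := exists_deg_two h₁ h₂ hm hb
  obtain ⟨c, hcm, hcb⟩ : ∃ c ∈ ({g ∈ B₁ \ B₂ | x ∈ g} : Finset _), c ≠ b :=
    exists_mem_ne (by unfold deg at hx; omega) b
  obtain ⟨hcT, xc⟩ := mem_filter.1 hcm
  obtain ⟨w, wb, u, uc, hw, hu, hin⟩ := exchange h₁ h₂ hb hcT xb xc hcb.symm hx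
  obtain ⟨w', wb', u', uc', hw', hu', hin'⟩ :=
    exchange h₁ h₃ (hT ▸ hb) (hT ▸ hcT) xb xc hcb.symm (hT ▸ hx)
  rw [← hT] at hw' hu'
  obtain rfl := eq_of_three_le_deg h₁ h₂ hm hb wb wb' hw hw'
  obtain rfl := eq_of_three_le_deg h₁ h₂ hm hcT uc uc' hu hu'
  have hmem : insert u (b.erase w) ∈ B₁ := by
    have : insert u (b.erase w) ∈ B₁ ∩ B₂ := hc.2 ▸ mem_inter.2 ⟨hin, hin'⟩
    exact (mem_inter.1 this).1
  -- `b` and `b - w + u` are blocks of `B₁` sharing two points, hence equal,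
  -- although `w` lies only in `b`
  have hwu : w ∉ insert u (b.erase w) := by
    rw [mem_insert, not_or]
    refine ⟨?_, notMem_erase w b⟩
    rintro rfl
    have hbB := mem_sdiff.1 hb
    rw [insert_erase wb] at hin
    exact hbB.2 hin
  have h3 : 1 < #(b.erase w) := by
    rw [card_erase_of_mem wb, (h₁.1 b (mem_sdiff.1 hb).1).2]
    norm_num
  obtain ⟨y, hy, z, hz, hyz⟩ := one_lt_card.1 h3
  have := h₁.block_eq hyz (mem_sdiff.1 hb).1 hmem (mem_of_mem_erase hy) (mem_of_mem_erase hz)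
    (mem_insert_of_mem hy) (mem_insert_of_mem hz)
  exact hwu (this ▸ wb)

/-! ### Examples -/

/-- The image under `σ` of the cyclic plane of order 3, whose blocks are the translates of the
difference set `{0, 1, 3, 9}` modulo 13. -/
def cyclicPlane (σ : Equiv.Perm (Fin 13)) : Finset (Finset (Fin 13)) :=
  univ.image fun i : Fin 13 => {σ i, σ (i + 1), σ (i + 3), σ (i + 9)}

lemma isS24_cyclicPlane (σ : Equiv.Perm (Fin 13)) : IsS24 univ (cyclicPlane σ) := by
  have hcov : ∀ x y : Fin 13, x ≠ y → ∃ i : Fin 13, x ∈ ({i, i + 1, i + 3, i + 9} : Finset _) ∧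
      y ∈ ({i, i + 1, i + 3, i + 9} : Finset (Fin 13)) := by decide +kernel
  have huniq : ∀ i j x y : Fin 13, x ≠ y → x ∈ ({i, i + 1, i + 3, i + 9} : Finset _) →
      y ∈ ({i, i + 1, i + 3, i + 9} : Finset _) → x ∈ ({j, j + 1, j + 3, j + 9} : Finset _) →
      y ∈ ({j, j + 1, j + 3, j + 9} : Finset (Fin 13)) → i = j := by decide +kernel
  have hcard : ∀ i : Fin 13, #({i, i + 1, i + 3, i + 9} : Finset (Fin 13)) = 4 := by decide +kernel
  have himg : ∀ i : Fin 13, ({σ i, σ (i + 1), σ (i + 3), σ (i + 9)} : Finset (Fin 13)) =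
      ({i, i + 1, i + 3, i + 9} : Finset (Fin 13)).map σ.toEmbedding := fun i => by simp
  simp only [cyclicPlane, himg]
  constructor
  · intro b hb
    obtain ⟨i, -, rfl⟩ := mem_image.1 hb
    exact ⟨subset_univ _, by rw [card_map, hcard]⟩
  · intro x y _ _ hxy
    have hxy' : σ.symm x ≠ σ.symm y := fun hh => hxy (σ.symm.injective hh)
    obtain ⟨i, hx, hy⟩ := hcov _ _ hxy'
    refine ⟨_, ⟨mem_image_of_mem _ (mem_univ i), mem_map_equiv.2 hx, mem_map_equiv.2 hy⟩, ?_⟩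
    rintro c ⟨hc, xc, yc⟩
    obtain ⟨j, -, rfl⟩ := mem_image.1 hc
    rw [huniq i j _ _ hxy' hx hy (mem_map_equiv.1 xc) (mem_map_equiv.1 yc)]

/-- The 3-cycle `a ↦ b ↦ c ↦ a`. -/
def cyc (a b c : Fin 13) : Equiv.Perm (Fin 13) := Equiv.swap a b * Equiv.swap b c

lemma mem_J3_of_perm {k : ℕ} (σ τ : Equiv.Perm (Fin 13))
    (h : cyclicPlane 1 ∩ cyclicPlane σ = cyclicPlane 1 ∩ cyclicPlane τ ∧
      cyclicPlane 1 ∩ cyclicPlane σ = cyclicPlane σ ∩ cyclicPlane τ ∧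
      #(cyclicPlane 1 ∩ cyclicPlane σ ∩ cyclicPlane τ) = k) : k ∈ J3 13 :=
  ⟨_, _, _, isS24_cyclicPlane 1, isS24_cyclicPlane σ, isS24_cyclicPlane τ, ⟨h.1, h.2.1⟩, h.2.2⟩

lemma J3_thirteen : J3 13 = ({0, 1, 2, 3, 4, 5, 13} : Set ℕ) := by
  ext k
  constructor
  · rintro ⟨B₁, B₂, B₃, h₁, h₂, h₃, hc, rfl⟩
    have heq : B₁ ∩ B₂ ∩ B₃ = B₁ ∩ B₂ := by
      rw [inter_assoc, ← hc.2, ← inter_assoc, inter_self]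
    rw [heq]
    have := card_inter_bound h₁ h₂ h₃ hc
    simp only [Set.mem_insert_iff, Set.mem_singleton_iff]
    omega
  · intro hk
    simp only [Set.mem_insert_iff, Set.mem_singleton_iff] at hk
    rcases hk with rfl | rfl | rfl | rfl | rfl | rfl | rfl
    · exact mem_J3_of_perm (cyc 0 9 1 * cyc 3 12 8) (cyc 1 9 0 * cyc 8 12 3) (by decide +kernel)
    · exact mem_J3_of_perm (cyc 10 6 5 * cyc 11 3 7) (cyc 5 6 10 * cyc 7 3 11) (by decide +kernel)
    · exact mem_J3_of_perm (cyc 5 2 12 * cyc 10 0 6) (cyc 12 2 5 * cyc 6 0 10) (by decide +kernel)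
    · exact mem_J3_of_perm (Equiv.swap 0 1 * Equiv.swap 2 3) (cyc 0 6 7 * Equiv.swap 7 1)
        (by decide +kernel)
    · exact mem_J3_of_perm (cyc 2 9 1) (cyc 1 9 2) (by decide +kernel)
    · exact mem_J3_of_perm (cyc 9 5 6 * cyc 11 1 4 * cyc 3 7 10)
        (cyc 6 5 9 * cyc 4 1 11 * cyc 10 7 3) (by decide +kernel)
    · exact mem_J3_of_perm 1 1 (by decide +kernel)

/-- `J_3[13] = I_3[13]`, i.e. `J_3[13] = {0,1,2,3,4,5,13}`. -/
theorem stmt3 : J3 13 = I3 13 ∧ J3 13 = ({0, 1, 2, 3, 4, 5, 13} : Set ℕ) := by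
  refine ⟨?_, J3_thirteen⟩
  rw [J3_thirteen]
  ext k
  simp only [I3, steinerBlockCount, Set.mem_insert_iff, Set.mem_singleton_iff, Set.mem_sdiff,
    Set.mem_ofPred_eq]
  omega
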